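/- Let P ⊆ Φ_{B_n} be a signed poset and let x ∈ ℝ^n satisfy ⟨x, α⟩ > 0 for all α ∈ P and ⟨x, w(α_i)⟩ ≠ 0 for every w ∈ 𝓛(P) and every 1 ≤ i ≤ n. Then the function u ↦ e^{−⟨x,u⟩} is Lebesgue-integrable on the root cone K^rt_P, and ∫_{K^rt_P} e^{−⟨x,u⟩} du = Σ_{w ∈ 𝓛(P)} ∏_{i=1}^n ⟨x, w(α_i)⟩^{−1}, the integral being with respect to Lebesgue measure on ℝ^n. -/

import Mathlib

open scoped Classical

noncomputable section

/-- Signed index set `±[n]`: `(true, i)` represents `+i`, `(false, i)` represents `-i`. -/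
abbrev SIdx (n : ℕ) := Bool × Fin n

/-- Negation `a ↦ -a` on `±[n]`. -/
def negS {n : ℕ} (a : SIdx n) : SIdx n := (!a.1, a.2)

/-- Standard basis vector `e_i` of `ℝ^n`. -/
def stdB (n : ℕ) (i : Fin n) : Fin n → ℝ := Pi.single i 1

/-- `rsgn true = 1`, `rsgn false = -1`. -/
def rsgn (s : Bool) : ℝ := if s then 1 else -1

/-- `v(a)` for `a ∈ ±[n]`: `v(+i) = e_i`, `v(-i) = -e_i`. -/
def vS {n : ℕ} (a : SIdx n) : Fin n → ℝ := rsgn a.1 • stdB n a.2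

/-- `v` on `±[n] ∪ {0}` (with `none` playing the role of `0`). -/
def vO {n : ℕ} : Option (SIdx n) → (Fin n → ℝ)
  | none => 0
  | some a => vS a

/-- Negation on `±[n] ∪ {0}`, fixing `0`. -/
def negO {n : ℕ} : Option (SIdx n) → Option (SIdx n)
  | none => none
  | some a => some (negS a)

/-- Standard inner product on `ℝ^n`. -/
def dotR {n : ℕ} (x y : Fin n → ℝ) : ℝ := ∑ i, x i * y i

/-- The type `B_n` root system `Φ_{B_n}`. -/
def BnRoots (n : ℕ) : Set (Fin n → ℝ) :=
  {α | (∃ i j : Fin n, i < j ∧ ∃ s t : Bool, α = rsgn s • stdB n i + rsgn t • stdB n j) ∨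
    ∃ i : Fin n, ∃ s : Bool, α = rsgn s • stdB n i}

/-- The positive roots `Φ⁺_{B_n}`. -/
def BnPos (n : ℕ) : Set (Fin n → ℝ) :=
  {α | (∃ i j : Fin n, i < j ∧ ∃ t : Bool, α = stdB n i + rsgn t • stdB n j) ∨
    ∃ i : Fin n, α = stdB n i}

/-- The type `C_n` root system `Φ_{C_n}`. -/
def CnRoots (n : ℕ) : Set (Fin n → ℝ) :=
  {α | (∃ i j : Fin n, i < j ∧ ∃ s t : Bool, α = rsgn s • stdB n i + rsgn t • stdB n j) ∨
    ∃ i : Fin n, ∃ s : Bool, α = (2 * rsgn s) • stdB n i}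

/-- Nonnegative real linear combinations of elements of `S`. -/
def nnSpan {n : ℕ} (S : Set (Fin n → ℝ)) : Set (Fin n → ℝ) :=
  {x | ∃ (r : ℕ) (c : Fin r → ℝ) (β : Fin r → (Fin n → ℝ)),
    (∀ m, 0 ≤ c m) ∧ (∀ m, β m ∈ S) ∧ x = ∑ m, c m • β m}

/-- A signed poset: a subset of `Φ_{B_n}`, antisymmetric and closed under positive
linear combinations remaining in `Φ_{B_n}`. -/
def IsSignedPoset (n : ℕ) (P : Set (Fin n → ℝ)) : Prop :=
  P ⊆ BnRoots n ∧ (∀ α ∈ P, -α ∉ P) ∧ ∀ α ∈ BnRoots n, α ∈ nnSpan P → α ∈ P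

/-- A `C_n`-signed poset. -/
def IsCnSignedPoset (n : ℕ) (Q : Set (Fin n → ℝ)) : Prop :=
  Q ⊆ CnRoots n ∧ (∀ α ∈ Q, -α ∉ Q) ∧ ∀ α ∈ CnRoots n, α ∈ nnSpan Q → α ∈ Q

/-- The root cone `K^rt_P`. -/
def rootCone {n : ℕ} (P : Set (Fin n → ℝ)) : Set (Fin n → ℝ) := nnSpan P

/-- The weight cone `K^wt_P`. -/
def weightCone {n : ℕ} (P : Set (Fin n → ℝ)) : Set (Fin n → ℝ) :=
  {f | ∀ α ∈ P, 0 ≤ dotR f α}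

/-- The Fischer (strict) order on `±[n] ∪ {0}`:
`a < b` iff `v(a) - v(b) ∈ P`, or (`b = -a ≠ 0` and `v(a) ∈ P`). -/
def fLT {n : ℕ} (P : Set (Fin n → ℝ)) (a b : Option (SIdx n)) : Prop :=
  vO a - vO b ∈ P ∨ (a ≠ none ∧ b = negO a ∧ vO a ∈ P)

/-- A subset of `±[n]` is isotropic if it contains no pair `{i, -i}`. -/
def Isotropic {n : ℕ} (J : Finset (SIdx n)) : Prop :=
  ∀ i : Fin n, ¬((true, i) ∈ J ∧ (false, i) ∈ J)

/-- Signed characteristic vector of a subset of `±[n]`. -/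
def chiF {n : ℕ} (J : Finset (SIdx n)) : Fin n → ℝ := fun i =>
  if (true, i) ∈ J then 1 else if (false, i) ∈ J then -1 else 0

/-- `J` is an ideal of the signed poset `P`. -/
def IsIdeal {n : ℕ} (P : Set (Fin n → ℝ)) (J : Finset (SIdx n)) : Prop :=
  Isotropic J ∧ ∀ α ∈ P, 0 ≤ dotR (chiF J) α

/-- Comparability in the Fischer order of `P`. -/
def fComp {n : ℕ} (P : Set (Fin n → ℝ)) (a b : SIdx n) : Prop :=
  fLT P (some a) (some b) ∨ fLT P (some b) (some a)

/-- One step in the comparability graph on a subset `J` of `±[n]`. -/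
def connStep {n : ℕ} (P : Set (Fin n → ℝ)) (J : Finset (SIdx n)) (a b : SIdx n) : Prop :=
  a ∈ J ∧ b ∈ J ∧ fComp P a b

/-- `J` is connected: nonempty, and any two of its elements are joined by a path inside `J`
in the comparability graph of the Fischer order of `P`. -/
def IsConnectedIdl {n : ℕ} (P : Set (Fin n → ℝ)) (J : Finset (SIdx n)) : Prop :=
  J.Nonempty ∧ ∀ a ∈ J, ∀ b ∈ J, Relation.ReflTransGen (connStep P J) a b

/-- A connected ideal of `P`. -/
def IsConnIdeal {n : ℕ} (P : Set (Fin n → ℝ)) (J : Finset (SIdx n)) : Prop :=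
  IsIdeal P J ∧ IsConnectedIdl P J

/-- Support `supp J = {|a| : a ∈ J}`. -/
def suppF {n : ℕ} (J : Finset (SIdx n)) : Finset (Fin n) := J.image Prod.snd

/-- `J` and `K` intersect nontrivially. -/
def NontrivInter {n : ℕ} (J K : Finset (SIdx n)) : Prop :=
  (suppF J ∩ suppF K).Nonempty ∧ ¬J ⊆ K ∧ ¬K ⊆ J

/-- `J` and `K` intersect trivially. -/
def TrivInter {n : ℕ} (J K : Finset (SIdx n)) : Prop := ¬NontrivInter J K

/-- A signed permutation, as an anti-symmetric bijection of `±[n]`. -/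
def IsSPerm {n : ℕ} (w : SIdx n ≃ SIdx n) : Prop := ∀ a, w (negS a) = negS (w a)

/-- Linear action of a signed permutation on `ℝ^n`, determined by `w(e_i) = v(w(+i))`. -/
def spAct {n : ℕ} (w : SIdx n ≃ SIdx n) (x : Fin n → ℝ) : Fin n → ℝ :=
  ∑ i, x i • vS (w (true, i))

/-- `w` is a linear extension of `P`: a signed permutation with `P ⊆ w(Φ⁺_{B_n})`. -/
def IsLinExt {n : ℕ} (P : Set (Fin n → ℝ)) (w : SIdx n ≃ SIdx n) : Prop :=
  IsSPerm w ∧ ∀ α ∈ P, ∃ β ∈ BnPos n, α = spAct w β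

/-- The (finite) set `𝓛(P)` of linear extensions of `P`. -/
def linExts (n : ℕ) (P : Set (Fin n → ℝ)) : Finset (SIdx n ≃ SIdx n) :=
  Finset.univ.filter (IsLinExt P)

/-- Simple roots of `Φ_{B_n}`: `α_i = e_i - e_{i+1}` for `i < n - 1`, `α_{n-1} = e_{n-1}`
(0-indexed). -/
def simpleRoot (n : ℕ) (i : Fin n) : Fin n → ℝ := fun j =>
  (if j = i then (1 : ℝ) else 0) - if (j : ℕ) = (i : ℕ) + 1 then 1 else 0

/-- `J^w_m = {w(1), …, w(m)}` (0-indexed: the images under `w` of `+1, …, +(m+1)`). -/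
def JwSet {n : ℕ} (w : SIdx n ≃ SIdx n) (m : Fin n) : Finset (SIdx n) :=
  (Finset.univ.filter (fun j : Fin n => j ≤ m)).image (fun j => w (true, j))

/-- An extensible ideal of `P`. -/
def Extensible (n : ℕ) (P : Set (Fin n → ℝ)) (J : Finset (SIdx n)) : Prop :=
  ∃ I : Finset (SIdx n), I.Nonempty ∧ Disjoint I J ∧
    IsIdeal P (J ∪ I) ∧ IsIdeal P (J ∪ I.image negS)

/-- The finite set `J_conn(P)` of connected ideals of `P`. -/
def JconnF (n : ℕ) (P : Set (Fin n → ℝ)) : Finset (Finset (SIdx n)) :=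
  Finset.univ.filter (IsConnIdeal P)

/-- Membership in `Π(P)`: an unordered pair of nontrivially intersecting connected ideals. -/
def inPiP {n : ℕ} (P : Set (Fin n → ℝ)) (p : Sym2 (Finset (SIdx n))) : Prop :=
  ∃ J K : Finset (SIdx n),
    p = s(J, K) ∧ IsConnIdeal P J ∧ IsConnIdeal P K ∧ NontrivInter J K

/-- The finite set `Π(P)` of unordered pairs of nontrivially intersecting connected ideals. -/
def PiP (n : ℕ) (P : Set (Fin n → ℝ)) : Finset (Sym2 (Finset (SIdx n))) :=
  Finset.univ.filter (inPiP P)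

/-- No connected ideal of `P` intersects two or more other connected ideals nontrivially. -/
def NoDoubleNontriv (n : ℕ) (P : Set (Fin n → ℝ)) : Prop :=
  ∀ J K K' : Finset (SIdx n), IsConnIdeal P J → IsConnIdeal P K → IsConnIdeal P K' →
    NontrivInter J K → NontrivInter J K' → K = K'

/-- The connected component of `a` inside `J` (w.r.t. the Fischer comparability graph). -/
def componentIn {n : ℕ} (P : Set (Fin n → ℝ)) (J : Finset (SIdx n)) (a : SIdx n) :
    Finset (SIdx n) :=
  J.filter (fun b => Relation.ReflTransGen (connStep P J) a b)

/-- The set of connected components of `J`. -/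
def componentsOf {n : ℕ} (P : Set (Fin n → ℝ)) (J : Finset (SIdx n)) :
    Finset (Finset (SIdx n)) :=
  J.image (componentIn P J)

/-- The signed support `supp±(f) = {sgn(f_i)·i : f_i ≠ 0}` of a vector `f ∈ ℝ^n`. -/
def suppPM {n : ℕ} (f : Fin n → ℝ) : Finset (SIdx n) :=
  Finset.univ.filter (fun a : SIdx n => if a.1 then 0 < f a.2 else f a.2 < 0)

/-- Index type for the variables `U_J`, `J` a connected ideal of `P`. -/
abbrev ConnIdx (n : ℕ) (P : Set (Fin n → ℝ)) := {J : Finset (SIdx n) // IsConnIdeal P J}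

/-- Integer signed characteristic vector, as an exponent vector for Laurent monomials. -/
def chiZ {n : ℕ} (J : Finset (SIdx n)) : Fin n →₀ ℤ :=
  Finsupp.equivFunOnFinite.symm (fun i =>
    if (true, i) ∈ J then 1 else if (false, i) ∈ J then -1 else 0)

/-- The map `φ : k[U_J : J ∈ J_conn(P)] → k[x_1^{±1}, …, x_n^{±1}]`, `U_J ↦ x^{χ_J}`. -/
def phiWt (n : ℕ) (P : Set (Fin n → ℝ)) (k : Type) [Field k] :
    MvPolynomial (ConnIdx n P) k →ₐ[k] AddMonoidAlgebra k (Fin n →₀ ℤ) :=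
  MvPolynomial.aeval (fun J => AddMonoidAlgebra.single (chiZ J.val) 1)

/-- The binomial `syz(U_J, U_K) = U_J U_K - (∏_A U_A) (∏_B U_B)`, where `A` runs over the
connected components of `J ∩ K` and `B` over the connected components of `supp±(χ_J + χ_K)`. -/
def syzPoly (n : ℕ) (P : Set (Fin n → ℝ)) (k : Type) [Field k] (J K : ConnIdx n P) :
    MvPolynomial (ConnIdx n P) k :=
  MvPolynomial.X J * MvPolynomial.X K -
    (∏ A ∈ Finset.univ.filter
        (fun A : ConnIdx n P => (A : Finset (SIdx n)) ∈ componentsOf P (J.val ∩ K.val)),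
        MvPolynomial.X A) *
      ∏ B ∈ Finset.univ.filter
        (fun B : ConnIdx n P =>
          (B : Finset (SIdx n)) ∈ componentsOf P (suppPM (chiF J.val + chiF K.val))),
        MvPolynomial.X B

/-- `θ_1, …, θ_r` is a regular sequence: the ideal it generates is proper, and each `θ_{m+1}`
is a non-zero-divisor modulo the ideal generated by `θ_1, …, θ_m`. -/
def IsRegSeq {R : Type} [CommRing R] {r : ℕ} (θ : Fin r → R) : Prop :=
  Ideal.span (Set.range θ) ≠ ⊤ ∧
    ∀ (m : ℕ) (hm : m < r) (x : R),
      θ ⟨m, hm⟩ * x ∈ Ideal.span (θ '' {j : Fin r | (j : ℕ) < m}) →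
        x ∈ Ideal.span (θ '' {j : Fin r | (j : ℕ) < m})

/-- The induced signed poset `P_A = P ∩ span_ℝ{e_i : i ∈ A}`. -/
def inducedPoset (n : ℕ) (P : Set (Fin n → ℝ)) (A : Finset (Fin n)) : Set (Fin n → ℝ) :=
  {α | α ∈ P ∧ α ∈ Submodule.span ℝ (stdB n '' (A : Set (Fin n)))}

/-- The major index of a signed permutation. -/
def majB {n : ℕ} (w : SIdx n ≃ SIdx n) : ℕ :=
  ∑ i ∈ Finset.univ.filter
      (fun i : Fin n => spAct w (simpleRoot n i) ∉ BnPos n), ((i : ℕ) + 1)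

/-- `[m]_q = 1 + q + ⋯ + q^{m-1}` in `ℤ[q]`. -/
def qInt (m : ℕ) : Polynomial ℤ := ∑ t ∈ Finset.range m, Polynomial.X ^ t

/-- The symmetric function `{J, K} ↦ ⟨x, χ_J + χ_K⟩` on unordered pairs. -/
def pairDot {n : ℕ} (x : Fin n → ℝ) : Sym2 (Finset (SIdx n)) → ℝ :=
  Sym2.lift ⟨fun J K => dotR x (chiF J + chiF K),
    fun J K => congrArg (dotR x) (add_comm (chiF J) (chiF K))⟩

/-- The symmetric function `{J, K} ↦ [|J| + |K|]_q` on unordered pairs. -/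
def pairQ {n : ℕ} : Sym2 (Finset (SIdx n)) → Polynomial ℤ :=
  Sym2.lift ⟨fun J K => qInt (J.card + K.card),
    fun J K => congrArg qInt (Nat.add_comm J.card K.card)⟩

/-- The principal order ideal `I_≤(a)` in the Fischer order restricted to `±[n]`. -/
def Ile {n : ℕ} (P : Set (Fin n → ℝ)) (a : SIdx n) : Set (SIdx n) :=
  {b | b = a ∨ fLT P (some b) (some a)}

/-- A set of signed indices is isotropic if it contains no pair `{i, -i}`. -/
def IsoSet {n : ℕ} (S : Set (SIdx n)) : Prop :=
  ∀ i : Fin n, ¬((true, i) ∈ S ∧ (false, i) ∈ S)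

/-- A covering pair of the Fischer order of `P`. -/
def CovPair {n : ℕ} (P : Set (Fin n → ℝ)) (a b : Option (SIdx n)) : Prop :=
  fLT P a b ∧ ¬∃ c : Option (SIdx n), fLT P a c ∧ fLT P c b

/-- The set of covering roots of `P`. -/
def covRoots {n : ℕ} (P : Set (Fin n → ℝ)) : Set (Fin n → ℝ) :=
  {x | ∃ a b : Option (SIdx n), CovPair P a b ∧ x = vO a - vO b}

/-- The set `J_ε = {i : ε_i = 1} ∪ {-i : ε_i = -1}` attached to a `{-1,0,1}`-vector. -/
def Jeps {n : ℕ} (ε : Fin n → ℝ) : Set (SIdx n) :=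
  {a | (a.1 = true ∧ ε a.2 = 1) ∨ (a.1 = false ∧ ε a.2 = -1)}

open MeasureTheory

/-!
Each linear extension `w` contributes the simplicial cone spanned by the vectors `± w α_i`, the
signs being chosen so that `⟨x, ·⟩` is positive on the generators, and weighted by the product of
these signs. In the coordinates dual to `w α_i` the integral of `e^{-⟨x, u⟩}` over this cone
factors into one-dimensional ones, and the weighted integral is `∏ i, ⟨x, w α_i⟩⁻¹`. It remains to
see that, away from a null set, the weighted indicator functions of these cones add up to the
indicator function of the root cone `K`.

This sum only depends on the Weyl chamber containing `x`, and the chambers on which `P` is positive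
are exactly those of the linear extensions of `P`. Crossing a wall between two of them does not
change the sum, since the affected terms cancel in pairs. If `u ∈ K`, the chamber of a linear
extension `v` leaves the single nonzero term `w = v`, so the sum is `1`. If `u` is outside the
closure of `K`, Farkas' lemma gives `f` positive on `P` with `⟨f, u⟩ < 0`; in the chamber of `f`
every nonzero term would force `⟨f, u⟩ ≥ 0`, so the sum is `0`.
-/

/-! ### Signed permutations acting on `ℝⁿ` -/

section SignedPermutations

variable {n : ℕ} {v w : Equiv.Perm (SIdx n)}

theorem dotR_eq_dotProduct (x y : Fin n → ℝ) : dotR x y = x ⬝ᵥ y := rfl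

theorem vS_negS (a : SIdx n) : vS (negS a) = -vS a := by
  obtain ⟨s, i⟩ := a
  cases s <;> simp [vS, negS, rsgn]

theorem vS_true (i : Fin n) : vS (true, i) = stdB n i := by
  simp [vS, rsgn]

theorem dotProduct_stdB (x : Fin n → ℝ) (i : Fin n) : x ⬝ᵥ stdB n i = x i :=
  dotProduct_single_one x i

theorem dotProduct_vS (x : Fin n → ℝ) (a : SIdx n) : x ⬝ᵥ vS a = rsgn a.1 * x a.2 := by
  rw [vS, dotProduct_smul, dotProduct_stdB, smul_eq_mul]

theorem vS_dotProduct_vS (a b : SIdx n) :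
    vS a ⬝ᵥ vS b = if a = b then 1 else if a = negS b then -1 else 0 := by
  obtain ⟨s, i⟩ := a
  obtain ⟨t, j⟩ := b
  rw [dotProduct_vS]
  by_cases hij : i = j <;> cases s <;> cases t <;>
    simp [vS, stdB, rsgn, negS, hij, eq_comm]

theorem sum_smul_stdB (x : Fin n → ℝ) : ∑ i, x i • stdB n i = x := by
  ext k
  simp [stdB, Pi.single_apply]

theorem IsSPerm.mul (hv : IsSPerm v) (hw : IsSPerm w) : IsSPerm (v * w) := fun a => by
  rw [Equiv.Perm.mul_apply, hw, hv, Equiv.Perm.mul_apply]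

theorem IsSPerm.inv (hw : IsSPerm w) : IsSPerm w⁻¹ := fun a => by
  rw [Equiv.Perm.inv_eq_iff_eq, hw, Equiv.Perm.coe_inv, Equiv.apply_symm_apply]

theorem isSPerm_one : IsSPerm (1 : Equiv.Perm (SIdx n)) := fun _ => rfl

/-- The action `spAct` of a signed permutation on `ℝⁿ`, bundled as a linear map. -/
def act (w : Equiv.Perm (SIdx n)) : (Fin n → ℝ) →ₗ[ℝ] (Fin n → ℝ) :=
  Fintype.linearCombination ℝ fun i => vS (w (true, i))

theorem spAct_eq_act (w : Equiv.Perm (SIdx n)) (x : Fin n → ℝ) : spAct w x = act w x := rfl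

theorem act_stdB (w : Equiv.Perm (SIdx n)) (i : Fin n) : act w (stdB n i) = vS (w (true, i)) := by
  simp [act, stdB]

theorem IsSPerm.act_vS (hw : IsSPerm w) (a : SIdx n) : act w (vS a) = vS (w a) := by
  obtain ⟨s, i⟩ := a
  cases s
  · have h_neg : ((false, i) : SIdx n) = negS (true, i) := rfl
    rw [h_neg, hw, vS_negS, vS_negS, map_neg, vS_true, act_stdB]
  · rw [vS_true, act_stdB]

theorem linearMap_ext_stdB {f g : (Fin n → ℝ) →ₗ[ℝ] (Fin n → ℝ)}
    (h : ∀ i, f (stdB n i) = g (stdB n i)) : f = g :=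
  LinearMap.pi_ext' fun i => LinearMap.ext_ring (h i)

theorem act_one : act (1 : Equiv.Perm (SIdx n)) = LinearMap.id :=
  linearMap_ext_stdB fun i => by
    rw [act_stdB, Equiv.Perm.one_apply, vS_true, LinearMap.id_apply]

theorem IsSPerm.act_mul (hv : IsSPerm v) (w : Equiv.Perm (SIdx n)) (x : Fin n → ℝ) :
    act (v * w) x = act v (act w x) := by
  refine LinearMap.congr_fun (linearMap_ext_stdB (g := act v ∘ₗ act w) fun i => ?_) x
  rw [act_stdB, LinearMap.comp_apply, act_stdB, hv.act_vS, Equiv.Perm.mul_apply]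

theorem IsSPerm.act_act_inv (hw : IsSPerm w) (x : Fin n → ℝ) : act w (act w⁻¹ x) = x := by
  rw [← hw.act_mul, mul_inv_cancel, act_one, LinearMap.id_apply]

theorem IsSPerm.act_dotProduct_act (hw : IsSPerm w) (x y : Fin n → ℝ) :
    act w x ⬝ᵥ act w y = x ⬝ᵥ y := by
  have h_basis (i j : Fin n) :
      act w (stdB n i) ⬝ᵥ act w (stdB n j) = stdB n i ⬝ᵥ stdB n j := by
    simp only [← vS_true, hw.act_vS, vS_dotProduct_vS, ← hw _, w.injective.eq_iff]
  conv_lhs => rw [← sum_smul_stdB x, ← sum_smul_stdB y]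
  conv_rhs => rw [← sum_smul_stdB x, ← sum_smul_stdB y]
  simp only [map_sum, map_smul, sum_dotProduct, dotProduct_sum, smul_dotProduct,
    dotProduct_smul, h_basis]

theorem IsSPerm.act_dotProduct (hw : IsSPerm w) (x y : Fin n → ℝ) :
    act w x ⬝ᵥ y = x ⬝ᵥ act w⁻¹ y := by
  rw [← hw.act_dotProduct_act x, hw.act_act_inv]

end SignedPermutations

/-! ### Roots, simple roots and fundamental weights -/

section Roots

variable {n : ℕ} {w : Equiv.Perm (SIdx n)} {γ : Fin n → ℝ}

theorem mem_BnRoots_iff : γ ∈ BnRoots n ↔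
    (∃ a b : SIdx n, vS a ⬝ᵥ vS b = 0 ∧ γ = vS a + vS b) ∨ ∃ a : SIdx n, γ = vS a := by
  have h_orthogonal (a b : SIdx n) : vS a ⬝ᵥ vS b = 0 ↔ a.2 ≠ b.2 := by
    obtain ⟨s, i⟩ := a
    obtain ⟨t, j⟩ := b
    rw [vS_dotProduct_vS]
    by_cases hij : i = j <;> cases s <;> cases t <;> simp [negS, hij]
  constructor
  · rintro (⟨i, j, hij, s, t, rfl⟩ | ⟨i, s, rfl⟩)
    · exact Or.inl ⟨(s, i), (t, j), (h_orthogonal _ _).2 hij.ne, rfl⟩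
    · exact Or.inr ⟨(s, i), rfl⟩
  · rintro (⟨a, b, hab, rfl⟩ | ⟨a, rfl⟩)
    · rcases lt_or_gt_of_ne ((h_orthogonal a b).1 hab) with hlt | hlt
      · exact Or.inl ⟨a.2, b.2, hlt, a.1, b.1, rfl⟩
      · exact Or.inl ⟨b.2, a.2, hlt, b.1, a.1, add_comm _ _⟩
    · exact Or.inr ⟨a.2, a.1, rfl⟩

theorem IsSPerm.act_mem_BnRoots (hw : IsSPerm w) (hγ : γ ∈ BnRoots n) :
    act w γ ∈ BnRoots n := by
  rw [mem_BnRoots_iff] at hγ ⊢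
  rcases hγ with ⟨a, b, hab, rfl⟩ | ⟨a, rfl⟩
  · refine Or.inl ⟨w a, w b, ?_, ?_⟩
    · rw [← hw.act_vS, ← hw.act_vS, hw.act_dotProduct_act, hab]
    · rw [map_add, hw.act_vS, hw.act_vS]
  · exact Or.inr ⟨w a, hw.act_vS a⟩

theorem IsSPerm.exists_act_eq_of_mem_BnRoots (hw : IsSPerm w) (hγ : γ ∈ BnRoots n) :
    ∃ δ ∈ BnRoots n, act w δ = γ :=
  ⟨act w⁻¹ γ, hw.inv.act_mem_BnRoots hγ, hw.act_act_inv γ⟩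

theorem BnPos_subset_BnRoots : BnPos n ⊆ BnRoots n := by
  rintro γ (⟨i, j, hij, t, rfl⟩ | ⟨i, rfl⟩)
  · exact Or.inl ⟨i, j, hij, true, t, by simp [rsgn]⟩
  · exact Or.inr ⟨i, true, by simp [rsgn]⟩

theorem mem_BnPos_or_neg_mem_BnPos (hγ : γ ∈ BnRoots n) : γ ∈ BnPos n ∨ -γ ∈ BnPos n := by
  rcases hγ with ⟨i, j, hij, s, t, rfl⟩ | ⟨i, s, rfl⟩
  · cases s
    · exact Or.inr (Or.inl ⟨i, j, hij, !t, by cases t <;> simp [rsgn, add_comm]⟩)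
    · exact Or.inl (Or.inl ⟨i, j, hij, t, by simp [rsgn]⟩)
  · cases s
    · exact Or.inr (Or.inr ⟨i, by simp [rsgn]⟩)
    · exact Or.inl (Or.inr ⟨i, by simp [rsgn]⟩)

theorem apply_eq_of_mem_BnRoots (hγ : γ ∈ BnRoots n) (k : Fin n) :
    γ k = -1 ∨ γ k = 0 ∨ γ k = 1 := by
  rcases hγ with ⟨i, j, hij, s, t, rfl⟩ | ⟨i, s, rfl⟩
  · have h_ne : k = i → k ≠ j := fun h => h ▸ hij.ne
    by_cases hki : k = i <;> by_cases hkj : k = j <;> cases s <;> cases t <;>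
      simp_all [rsgn, stdB]
  · by_cases hki : k = i <;> cases s <;> simp [rsgn, stdB, hki]

theorem simpleRoot_eq_sub (j : Fin n) (h : (j : ℕ) + 1 < n) :
    simpleRoot n j = stdB n j - stdB n ⟨j + 1, h⟩ := by
  ext k
  simp [simpleRoot, stdB, Pi.single_apply, Fin.ext_iff]

theorem simpleRoot_eq_stdB (j : Fin n) (h : ¬(j : ℕ) + 1 < n) : simpleRoot n j = stdB n j := by
  ext k
  have hk : (k : ℕ) ≠ j + 1 := by omega
  simp [simpleRoot, stdB, Pi.single_apply, hk]

theorem simpleRoot_mem_BnPos (j : Fin n) : simpleRoot n j ∈ BnPos n := by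
  by_cases h : (j : ℕ) + 1 < n
  · refine Or.inl ⟨j, ⟨j + 1, h⟩, Nat.lt_succ_self j, false, ?_⟩
    simp [simpleRoot_eq_sub j h, rsgn, sub_eq_add_neg]
  · exact Or.inr ⟨j, simpleRoot_eq_stdB j h⟩

theorem IsSPerm.act_simpleRoot_mem_BnRoots (hw : IsSPerm w) (j : Fin n) :
    act w (simpleRoot n j) ∈ BnRoots n :=
  hw.act_mem_BnRoots (BnPos_subset_BnRoots (simpleRoot_mem_BnPos j))

/-- The vectors `e_1 + ⋯ + e_i`, forming the basis dual to the simple roots.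
(The last one is twice the usual fundamental weight of type `B_n`.) -/
def fundWeight (n : ℕ) (i : Fin n) : Fin n → ℝ := fun k => if k ≤ i then 1 else 0

theorem simpleRoot_dotProduct_fundWeight (i k : Fin n) :
    simpleRoot n i ⬝ᵥ fundWeight n k = if i = k then 1 else 0 := by
  rw [dotProduct_comm]
  by_cases h : (i : ℕ) + 1 < n
  · rw [simpleRoot_eq_sub i h, dotProduct_sub, dotProduct_stdB, dotProduct_stdB]
    simp only [fundWeight, Fin.le_def, Fin.ext_iff]
    split_ifs <;> first | omega | norm_num
  · rw [simpleRoot_eq_stdB i h, dotProduct_stdB]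
    simp only [fundWeight, Fin.le_def, Fin.ext_iff]
    split_ifs <;> first | omega | rfl

theorem sum_dotProduct_fundWeight_smul_simpleRoot (y : Fin n → ℝ) :
    ∑ i, (y ⬝ᵥ fundWeight n i) • simpleRoot n i = y := by
  let A : Matrix (Fin n) (Fin n) ℝ := Matrix.of (simpleRoot n)
  let Ω : Matrix (Fin n) (Fin n) ℝ := Matrix.of (fundWeight n)
  have h_dual : A * Ω.transpose = 1 := by
    ext i k
    rw [Matrix.mul_apply', Matrix.one_apply]
    exact simpleRoot_dotProduct_fundWeight i k
  have h_dual' : Ω.transpose * A = 1 := mul_eq_one_comm.1 h_dual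
  calc ∑ i, (y ⬝ᵥ fundWeight n i) • simpleRoot n i
      = Matrix.vecMul (Matrix.vecMul y Ω.transpose) A := by
        rw [Matrix.vecMul_eq_sum]; rfl
    _ = y := by rw [Matrix.vecMul_vecMul, h_dual', Matrix.vecMul_one]

theorem IsSPerm.dotProduct_eq_sum (hw : IsSPerm w) (y z : Fin n → ℝ) :
    y ⬝ᵥ z = ∑ i, (y ⬝ᵥ act w (fundWeight n i)) * (z ⬝ᵥ act w (simpleRoot n i)) := by
  have h_expand := congrArg (act w) (sum_dotProduct_fundWeight_smul_simpleRoot (act w⁻¹ y))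
  rw [hw.act_act_inv] at h_expand
  conv_lhs => rw [← h_expand, dotProduct_comm]
  simp only [map_sum, map_smul, dotProduct_sum, dotProduct_smul, smul_eq_mul]
  refine Finset.sum_congr rfl fun i _ => ?_
  rw [hw.inv.act_dotProduct, inv_inv]

theorem dotProduct_fundWeight_nonneg (hγ : γ ∈ BnPos n) (k : Fin n) :
    0 ≤ γ ⬝ᵥ fundWeight n k := by
  rw [dotProduct_comm]
  rcases hγ with ⟨i, j, hij, t, rfl⟩ | ⟨i, rfl⟩
  · have h_mono : j ≤ k → i ≤ k := hij.le.trans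
    simp only [dotProduct_add, dotProduct_smul, dotProduct_stdB, fundWeight, rsgn, smul_eq_mul]
    split_ifs <;> simp_all
  · rw [dotProduct_stdB, fundWeight]
    split_ifs <;> simp

theorem mem_BnPos_of_dotProduct_fundWeight_pos (hγ : γ ∈ BnRoots n) {k : Fin n}
    (hk : 0 < γ ⬝ᵥ fundWeight n k) : γ ∈ BnPos n := by
  refine (mem_BnPos_or_neg_mem_BnPos hγ).resolve_right fun h_neg => ?_
  have h_nonneg := dotProduct_fundWeight_nonneg h_neg k
  rw [neg_dotProduct] at h_nonneg
  linarith

/-- The vector `(n, n - 1, …, 1)`, the sum of the `fundWeight`s: a representative of the open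
fundamental Weyl chamber. -/
def rho (n : ℕ) : Fin n → ℝ := fun i => n - i

theorem rho_dotProduct_simpleRoot (j : Fin n) : rho n ⬝ᵥ simpleRoot n j = 1 := by
  by_cases h : (j : ℕ) + 1 < n
  · rw [simpleRoot_eq_sub j h, dotProduct_sub, dotProduct_stdB, dotProduct_stdB]
    simp [rho]
  · have hj : (n : ℝ) = j + 1 := by exact_mod_cast (by omega : n = j + 1)
    rw [simpleRoot_eq_stdB j h, dotProduct_stdB, rho, hj]
    ring

theorem rho_dotProduct_pos (hγ : γ ∈ BnPos n) : 0 < rho n ⬝ᵥ γ := by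
  have h_pos (i : Fin n) : 0 < rho n i := sub_pos.2 (Nat.cast_lt.2 i.2)
  rcases hγ with ⟨i, j, hij, t, rfl⟩ | ⟨i, rfl⟩
  · have h_anti : rho n j < rho n i := sub_lt_sub_left (Nat.cast_lt.2 hij) _
    have := h_pos j
    rw [dotProduct_add, dotProduct_smul, dotProduct_stdB, dotProduct_stdB]
    cases t <;> simp [rsgn] <;> linarith
  · rw [dotProduct_stdB]
    exact h_pos i

theorem mem_BnPos_iff_rho_dotProduct_pos (hγ : γ ∈ BnRoots n) :
    γ ∈ BnPos n ↔ 0 < rho n ⬝ᵥ γ := by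
  refine ⟨rho_dotProduct_pos, fun h => (mem_BnPos_or_neg_mem_BnPos hγ).resolve_right ?_⟩
  intro h_neg
  have := rho_dotProduct_pos h_neg
  rw [dotProduct_neg] at this
  linarith

theorem rho_dotProduct_ne_zero (hγ : γ ∈ BnRoots n) : rho n ⬝ᵥ γ ≠ 0 := by
  rcases mem_BnPos_or_neg_mem_BnPos hγ with h | h
  · exact (rho_dotProduct_pos h).ne'
  · have := rho_dotProduct_pos h
    rw [dotProduct_neg] at this
    linarith

theorem IsSPerm.act_rho_dotProduct_ne_zero (hw : IsSPerm w) (hγ : γ ∈ BnRoots n) :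
    act w (rho n) ⬝ᵥ γ ≠ 0 := by
  rw [hw.act_dotProduct]
  exact rho_dotProduct_ne_zero (hw.inv.act_mem_BnRoots hγ)

end Roots

/-! ### Reflections -/

section Reflections

variable {n : ℕ} {w : Equiv.Perm (SIdx n)} {γ : Fin n → ℝ}

/-- The orthogonal reflection of `ℝⁿ` in the hyperplane perpendicular to `α`
(the identity when `α = 0`). -/
def rootReflection (α : Fin n → ℝ) : (Fin n → ℝ) →ₗ[ℝ] (Fin n → ℝ) :=
  Module.preReflection α ((2 / (α ⬝ᵥ α)) • dotProductEquiv ℝ (Fin n) α)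

theorem rootReflection_apply (α y : Fin n → ℝ) :
    rootReflection α y = y - (2 / (α ⬝ᵥ α) * (α ⬝ᵥ y)) • α := rfl

theorem rootReflection_neg (α : Fin n → ℝ) : rootReflection (-α) = rootReflection α :=
  LinearMap.ext fun y => by simp [rootReflection_apply]

theorem rootReflection_self (α : Fin n → ℝ) : rootReflection α α = -α := by
  rcases eq_or_ne α 0 with rfl | hα
  · simp
  · have h_ne : α ⬝ᵥ α ≠ 0 := mt dotProduct_self_eq_zero.1 hα
    rw [rootReflection_apply, div_mul_cancel₀ _ h_ne, two_smul]
    abel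

theorem rootReflection_dotProduct (α y z : Fin n → ℝ) :
    rootReflection α y ⬝ᵥ z = y ⬝ᵥ rootReflection α z := by
  simp only [rootReflection_apply, sub_dotProduct, dotProduct_sub, smul_dotProduct,
    dotProduct_smul, smul_eq_mul, dotProduct_comm y α]
  ring

theorem IsSPerm.act_rootReflection (hw : IsSPerm w) (α y : Fin n → ℝ) :
    act w (rootReflection α y) = rootReflection (act w α) (act w y) := by
  simp only [rootReflection_apply, map_sub, map_smul, hw.act_dotProduct_act]

/-- The signed permutation acting on `ℝⁿ` as the reflection in the simple root `α_j`: it exchanges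
`j` with `j + 1`, or `j` with `-j` when `j` is the last index. -/
def simpleReflection (j : Fin n) : Equiv.Perm (SIdx n) :=
  if h : (j : ℕ) + 1 < n then Equiv.prodCongr (Equiv.refl Bool) (Equiv.swap j ⟨j + 1, h⟩)
  else Equiv.swap (true, j) (false, j)

theorem simpleReflection_mul_self (j : Fin n) : simpleReflection j * simpleReflection j = 1 := by
  by_cases h : (j : ℕ) + 1 < n
  · ext a <;> simp [simpleReflection, h]
  · simp [simpleReflection, h]

theorem isSPerm_simpleReflection (j : Fin n) : IsSPerm (simpleReflection j) := by
  rintro ⟨s, i⟩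
  by_cases h : (j : ℕ) + 1 < n
  · simp [simpleReflection, h, negS]
  · by_cases hij : i = j <;> cases s <;> simp [simpleReflection, h, negS, hij, Equiv.swap_apply_def]

theorem act_simpleReflection (j : Fin n) :
    act (simpleReflection j) = rootReflection (simpleRoot n j) := by
  refine linearMap_ext_stdB fun i => ?_
  rw [act_stdB, rootReflection_apply, dotProduct_stdB]
  by_cases h : (j : ℕ) + 1 < n
  · have h_ne : j ≠ ⟨j + 1, h⟩ := by simp [Fin.ext_iff]
    have h_norm : simpleRoot n j ⬝ᵥ simpleRoot n j = 2 := by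
      rw [simpleRoot_eq_sub j h, dotProduct_sub, dotProduct_stdB, dotProduct_stdB]
      norm_num [stdB, h_ne, h_ne.symm]
    have h_perm : simpleReflection j (true, i) = (true, Equiv.swap j ⟨j + 1, h⟩ i) := by
      simp [simpleReflection, h]
    rw [h_norm, h_perm, vS_true, simpleRoot_eq_sub j h, Equiv.swap_apply_def]
    split_ifs with hi hi' <;> simp_all [stdB]
  · have h_norm : simpleRoot n j ⬝ᵥ simpleRoot n j = 1 := by
      rw [simpleRoot_eq_stdB j h, dotProduct_stdB]
      simp [stdB]
    rw [h_norm, simpleRoot_eq_stdB j h]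
    by_cases hi : i = j <;>
      simp [simpleReflection, h, hi, vS, rsgn, stdB, Equiv.swap_apply_def, two_smul]

theorem IsSPerm.act_mul_simpleReflection (hw : IsSPerm w) (j : Fin n) (y : Fin n → ℝ) :
    act (w * simpleReflection j) y = rootReflection (act w (simpleRoot n j)) (act w y) := by
  rw [hw.act_mul, act_simpleReflection, hw.act_rootReflection]

theorem rootReflection_simpleRoot_fundWeight {j k : Fin n} (hkj : k ≠ j) :
    rootReflection (simpleRoot n j) (fundWeight n k) = fundWeight n k := by
  rw [rootReflection_apply, simpleRoot_dotProduct_fundWeight, if_neg hkj.symm]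
  simp

theorem exists_ne_dotProduct_fundWeight_pos (hγ : γ ∈ BnPos n) {j : Fin n}
    (hγj : γ ≠ simpleRoot n j) : ∃ k ≠ j, 0 < γ ⬝ᵥ fundWeight n k := by
  by_contra! h_nonpos
  have h_zero (k : Fin n) (hk : k ≠ j) : γ ⬝ᵥ fundWeight n k = 0 :=
    le_antisymm (h_nonpos k hk) (dotProduct_fundWeight_nonneg hγ k)
  obtain ⟨c, rfl⟩ : ∃ c : ℝ, γ = c • simpleRoot n j := by
    refine ⟨γ ⬝ᵥ fundWeight n j, ?_⟩
    conv_lhs => rw [← sum_dotProduct_fundWeight_smul_simpleRoot γ]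
    exact Fintype.sum_eq_single j fun k hk => by rw [h_zero k hk, zero_smul]
  have hc_pos : 0 < c := by
    simpa [rho_dotProduct_simpleRoot] using rho_dotProduct_pos hγ
  have hc : c = -1 ∨ c = 0 ∨ c = 1 := by
    simpa [simpleRoot] using apply_eq_of_mem_BnRoots (BnPos_subset_BnRoots hγ) j
  have hc_one : c = 1 := by rcases hc with h | h | h <;> linarith
  exact hγj (by rw [hc_one, one_smul])

theorem rootReflection_simpleRoot_mem_BnPos (hγ : γ ∈ BnPos n) {j : Fin n}
    (hγj : γ ≠ simpleRoot n j) : rootReflection (simpleRoot n j) γ ∈ BnPos n := by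
  obtain ⟨k, hkj, hk⟩ := exists_ne_dotProduct_fundWeight_pos hγ hγj
  have h_root : rootReflection (simpleRoot n j) γ ∈ BnRoots n := by
    rw [← act_simpleReflection]
    exact (isSPerm_simpleReflection j).act_mem_BnRoots (BnPos_subset_BnRoots hγ)
  refine mem_BnPos_of_dotProduct_fundWeight_pos h_root (k := k) ?_
  rwa [rootReflection_dotProduct, rootReflection_simpleRoot_fundWeight hkj]

end Reflections

/-! ### Linear extensions and dominant chambers -/

section LinearExtensions

variable {n : ℕ} {P : Set (Fin n → ℝ)} {v w : Equiv.Perm (SIdx n)} {f γ : Fin n → ℝ}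

theorem mem_linExts : w ∈ linExts n P ↔ IsLinExt P w := by
  simp [linExts]

theorem mem_linExts_iff_act_rho_pos (hP : P ⊆ BnRoots n) (hw : IsSPerm w) :
    w ∈ linExts n P ↔ ∀ α ∈ P, 0 < act w (rho n) ⬝ᵥ α := by
  rw [mem_linExts]
  constructor
  · intro h α hα
    obtain ⟨β, hβ, rfl⟩ := h.2 α hα
    rw [spAct_eq_act, hw.act_dotProduct_act]
    exact rho_dotProduct_pos hβ
  · refine fun h => ⟨hw, fun α hα => ⟨act w⁻¹ α, ?_, (hw.act_act_inv α).symm⟩⟩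
    rw [mem_BnPos_iff_rho_dotProduct_pos (hw.inv.act_mem_BnRoots (hP hα)), ← hw.act_dotProduct]
    exact h α hα

theorem mul_simpleReflection_mem_linExts (hw : w ∈ linExts n P) {j : Fin n}
    (hj : act w (simpleRoot n j) ∉ P) : w * simpleReflection j ∈ linExts n P := by
  rw [mem_linExts] at hw ⊢
  refine ⟨hw.1.mul (isSPerm_simpleReflection j), fun α hα => ?_⟩
  obtain ⟨β, hβ, rfl⟩ := hw.2 α hα
  have hβj : β ≠ simpleRoot n j := by
    rintro rfl
    exact hj hα
  refine ⟨_, rootReflection_simpleRoot_mem_BnPos hβ hβj, ?_⟩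
  rw [spAct_eq_act, spAct_eq_act, ← act_simpleReflection,
    ← (hw.1.mul (isSPerm_simpleReflection j)).act_mul, mul_assoc, simpleReflection_mul_self,
    mul_one]

theorem neg_act_simpleRoot_notMem (hP : P ⊆ BnRoots n) (hw : w ∈ linExts n P) (j : Fin n) :
    -act w (simpleRoot n j) ∉ P := fun h => by
  have hw' : IsSPerm w := (mem_linExts.1 hw).1
  have h_pos := (mem_linExts_iff_act_rho_pos hP hw').1 hw _ h
  rw [dotProduct_neg, hw'.act_dotProduct_act, rho_dotProduct_simpleRoot] at h_pos
  linarith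

/-- `f` lies in the closed Weyl chamber of `v`. -/
def IsDominant (f : Fin n → ℝ) (v : Equiv.Perm (SIdx n)) : Prop :=
  ∀ i, 0 ≤ f ⬝ᵥ act v (simpleRoot n i)

theorem IsDominant.dotProduct_act_nonneg (hf : IsDominant f v) (hv : IsSPerm v)
    (hγ : γ ∈ BnPos n) : 0 ≤ f ⬝ᵥ act v γ := by
  rw [dotProduct_comm, hv.dotProduct_eq_sum]
  refine Finset.sum_nonneg fun i _ => mul_nonneg ?_ (hf i)
  rw [hv.act_dotProduct_act]
  exact dotProduct_fundWeight_nonneg hγ i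

theorem IsDominant.mul_act_rho_nonneg (hf : IsDominant f v) (hv : IsSPerm v)
    (hγ : γ ∈ BnRoots n) : 0 ≤ (f ⬝ᵥ γ) * (act v (rho n) ⬝ᵥ γ) := by
  obtain ⟨δ, hδ, rfl⟩ := hv.exists_act_eq_of_mem_BnRoots hγ
  rw [hv.act_dotProduct_act]
  rcases mem_BnPos_or_neg_mem_BnPos hδ with h_pos | h_neg
  · exact mul_nonneg (hf.dotProduct_act_nonneg hv h_pos) (rho_dotProduct_pos h_pos).le
  · have h := mul_nonneg (hf.dotProduct_act_nonneg hv h_neg) (rho_dotProduct_pos h_neg).le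
    rwa [map_neg, dotProduct_neg, dotProduct_neg, neg_mul_neg] at h

theorem IsDominant.mem_linExts (hf : IsDominant f v) (hv : IsSPerm v) (hP : P ⊆ BnRoots n)
    (hfP : ∀ α ∈ P, 0 < f ⬝ᵥ α) : v ∈ linExts n P := by
  refine (mem_linExts_iff_act_rho_pos hP hv).2 fun α hα => ?_
  have h_nonneg : 0 ≤ act v (rho n) ⬝ᵥ α :=
    nonneg_of_mul_nonneg_right (hf.mul_act_rho_nonneg hv (hP hα)) (hfP α hα)
  exact h_nonneg.lt_of_ne' (hv.act_rho_dotProduct_ne_zero (hP hα))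

theorem dotProduct_lt_dotProduct_rootReflection {α z : Fin n → ℝ} (hf : f ⬝ᵥ α < 0)
    (hz : 0 < z ⬝ᵥ α) : f ⬝ᵥ z < f ⬝ᵥ rootReflection α z := by
  have hα : 0 < α ⬝ᵥ α := by
    refine (Finset.sum_nonneg fun i _ => mul_self_nonneg (α i)).lt_of_ne' fun h => hf.ne ?_
    rw [dotProduct_self_eq_zero.1 h, dotProduct_zero]
  rw [rootReflection_apply, dotProduct_sub, dotProduct_smul, smul_eq_mul, dotProduct_comm α z]
  have := mul_neg_of_pos_of_neg (mul_pos (div_pos two_pos hα) hz) hf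
  linarith

-- A chamber maximising `f · vρ` is dominant: otherwise crossing one of its walls increases it.
theorem exists_isDominant_of_flip_invariant (hfP : ∀ α ∈ P, 0 < f ⬝ᵥ α)
    {p : Equiv.Perm (SIdx n) → Prop}
    (hp : ∀ w ∈ linExts n P, ∀ i, act w (simpleRoot n i) ∉ P → p w → p (w * simpleReflection i))
    (hv : v ∈ linExts n P) (hpv : p v) : ∃ v' ∈ linExts n P, p v' ∧ IsDominant f v' := by
  obtain ⟨w, hw, h_max⟩ := Finset.exists_max_image ((linExts n P).filter p)
    (fun w => f ⬝ᵥ act w (rho n)) ⟨v, Finset.mem_filter.2 ⟨hv, hpv⟩⟩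
  rw [Finset.mem_filter] at hw
  refine ⟨w, hw.1, hw.2, fun i => ?_⟩
  by_contra! h_neg
  have hwS : IsSPerm w := (mem_linExts.1 hw.1).1
  have hiP : act w (simpleRoot n i) ∉ P := fun h => (hfP _ h).not_gt h_neg
  have h_flip : w * simpleReflection i ∈ (linExts n P).filter p :=
    Finset.mem_filter.2 ⟨mul_simpleReflection_mem_linExts hw.1 hiP, hp w hw.1 i hiP hw.2⟩
  refine (h_max _ h_flip).not_gt ?_
  rw [hwS.act_mul_simpleReflection]
  refine dotProduct_lt_dotProduct_rootReflection h_neg ?_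
  rw [hwS.act_dotProduct_act, rho_dotProduct_simpleRoot]
  exact one_pos

theorem exists_isDominant (f : Fin n → ℝ) : ∃ v, IsSPerm v ∧ IsDominant f v := by
  obtain ⟨v, hv, -, hf⟩ := exists_isDominant_of_flip_invariant (P := ∅) (f := f)
    (p := fun _ => True) (v := 1) (by simp) (by simp)
    (mem_linExts.2 ⟨isSPerm_one, by simp⟩) trivial
  exact ⟨v, (mem_linExts.1 hv).1, hf⟩

theorem eq_one_of_act_rho_dotProduct_pos (hw : IsSPerm w)
    (h : ∀ γ ∈ BnPos n, 0 < act w (rho n) ⬝ᵥ γ) : w = 1 := by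
  have h_apply (a : SIdx n) : act w (rho n) ⬝ᵥ vS a = rsgn (w⁻¹ a).1 * (n - (w⁻¹ a).2) := by
    rw [hw.act_dotProduct, hw.inv.act_vS, dotProduct_vS, rho]
  have h_sign (k : Fin n) : (w⁻¹ (true, k)).1 = true := by
    have h_pos := h (stdB n k) (Or.inr ⟨k, rfl⟩)
    rw [← vS_true, h_apply] at h_pos
    have h_lt : ((w⁻¹ (true, k)).2 : ℝ) < n := Nat.cast_lt.2 (w⁻¹ (true, k)).2.2
    by_contra h_false
    rw [Bool.not_eq_true] at h_false
    rw [h_false, rsgn, if_neg Bool.false_ne_true] at h_pos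
    linarith
  have h_mono : StrictMono fun k => (w⁻¹ (true, k)).2 := fun i j hij => by
    have h_pos := h (stdB n i - stdB n j)
      (Or.inl ⟨i, j, hij, false, by simp [rsgn, sub_eq_add_neg]⟩)
    simp only [← vS_true, dotProduct_sub, h_apply, h_sign, rsgn, if_true, one_mul,
      sub_sub_sub_cancel_left, sub_pos] at h_pos
    exact Fin.lt_def.2 (Nat.cast_lt.1 h_pos)
  have h_true (k : Fin n) : w⁻¹ (true, k) = (true, k) :=
    Prod.ext (h_sign k) (congrFun h_mono.eq_id k)
  refine inv_eq_one.1 (Equiv.ext ?_)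
  rintro ⟨s, k⟩
  cases s
  · exact (hw.inv (true, k)).trans (congrArg negS (h_true k))
  · exact h_true k

theorem eq_of_isDominant_act_rho (hv : IsSPerm v) (hw : IsSPerm w)
    (h : IsDominant (act v (rho n)) w) : w = v := by
  have hu : IsSPerm (w⁻¹ * v) := hw.inv.mul hv
  refine inv_mul_eq_one.1 (eq_one_of_act_rho_dotProduct_pos hu fun γ hγ => ?_)
  have h_nonneg : 0 ≤ act (w⁻¹ * v) (rho n) ⬝ᵥ γ := by
    rw [hw.inv.act_mul, hw.inv.act_dotProduct, inv_inv]
    exact h.dotProduct_act_nonneg hw hγ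
  exact h_nonneg.lt_of_ne' (hu.act_rho_dotProduct_ne_zero (BnPos_subset_BnRoots hγ))

/-- No root hyperplane other than that of `β` separates `z` from its reflection in `β`. -/
def IsAdjacentToWall (z β : Fin n → ℝ) : Prop :=
  ∀ γ ∈ BnRoots n, γ ≠ β → γ ≠ -β → Real.sign (rootReflection β z ⬝ᵥ γ) = Real.sign (z ⬝ᵥ γ)

theorem isAdjacentToWall_act_rho (hv : IsSPerm v) (i : Fin n) :
    IsAdjacentToWall (act v (rho n)) (act v (simpleRoot n i)) := by
  intro γ hγ h_ne h_ne_neg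
  obtain ⟨δ, hδ, rfl⟩ := hv.exists_act_eq_of_mem_BnRoots hγ
  have hδ_ne : δ ≠ simpleRoot n i := fun h => h_ne (by rw [h])
  have hδ_ne_neg : -δ ≠ simpleRoot n i := fun h => h_ne_neg (by rw [← h, map_neg, neg_neg])
  rw [rootReflection_dotProduct, ← hv.act_rootReflection, hv.act_dotProduct_act,
    hv.act_dotProduct_act]
  have h_sign_pos {δ : Fin n → ℝ} (h_pos : δ ∈ BnPos n) (h_ne : δ ≠ simpleRoot n i) :
      Real.sign (rho n ⬝ᵥ rootReflection (simpleRoot n i) δ) = Real.sign (rho n ⬝ᵥ δ) := by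
    rw [Real.sign_of_pos (rho_dotProduct_pos h_pos),
      Real.sign_of_pos (rho_dotProduct_pos (rootReflection_simpleRoot_mem_BnPos h_pos h_ne))]
  rcases mem_BnPos_or_neg_mem_BnPos hδ with h_pos | h_neg
  · exact h_sign_pos h_pos hδ_ne
  · simpa [Real.sign_neg] using h_sign_pos h_neg hδ_ne_neg

end LinearExtensions

/-! ### Signed sums over linear extensions -/

section SignedSums

variable {n : ℕ} {P : Set (Fin n → ℝ)} {v w : Equiv.Perm (SIdx n)} {f u x z z' β : Fin n → ℝ}

/-- For nonzero reals, the common sign of `a` and `b`, or `0` if their signs differ. -/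
def signMatch (a b : ℝ) : ℝ := (Real.sign a + Real.sign b) / 2

theorem signMatch_of_pos_of_pos {a b : ℝ} (ha : 0 < a) (hb : 0 < b) : signMatch a b = 1 := by
  norm_num [signMatch, Real.sign_of_pos ha, Real.sign_of_pos hb]

theorem mul_pos_of_signMatch_ne_zero {a b : ℝ} (ha : a ≠ 0) (hb : b ≠ 0)
    (h : signMatch a b ≠ 0) : 0 < a * b := by
  rcases ha.lt_or_gt with ha | ha <;> rcases hb.lt_or_gt with hb | hb
  · exact mul_pos_of_neg_of_neg ha hb
  · norm_num [signMatch, Real.sign_of_neg ha, Real.sign_of_pos hb] at h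
  · norm_num [signMatch, Real.sign_of_pos ha, Real.sign_of_neg hb] at h
  · exact mul_pos ha hb

theorem sign_eq_sign_of_mul_pos {a b : ℝ} (h : 0 < a * b) : Real.sign a = Real.sign b := by
  rcases mul_pos_iff.1 h with ⟨ha, hb⟩ | ⟨ha, hb⟩
  · rw [Real.sign_of_pos ha, Real.sign_of_pos hb]
  · rw [Real.sign_of_neg ha, Real.sign_of_neg hb]

/-- The contribution of `w` to `signedSum`: up to a sign, the indicator function of the cone
spanned by the vectors `± w α_i`, with signs chosen so that each has positive product with `z`. -/
def coneTerm (z u : Fin n → ℝ) (w : Equiv.Perm (SIdx n)) : ℝ :=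
  ∏ i, signMatch (z ⬝ᵥ act w (simpleRoot n i)) (u ⬝ᵥ act w (fundWeight n i))

/-- The sum of `coneTerm` over the linear extensions of `P`. For generic `u` and suitable `z` it is
the indicator function of the root cone of `P`. -/
def signedSum (P : Set (Fin n → ℝ)) (z u : Fin n → ℝ) : ℝ :=
  ∑ w ∈ linExts n P, coneTerm z u w

/-- `u` lies on no wall of a simplicial cone spanned by the simple system of a chamber. -/
def IsGeneric (u : Fin n → ℝ) : Prop :=
  ∀ w : Equiv.Perm (SIdx n), IsSPerm w → ∀ i, u ⬝ᵥ act w (fundWeight n i) ≠ 0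

theorem coneTerm_congr
    (h : ∀ i, Real.sign (z ⬝ᵥ act w (simpleRoot n i)) = Real.sign (z' ⬝ᵥ act w (simpleRoot n i)))
    (u : Fin n → ℝ) : coneTerm z u w = coneTerm z' u w :=
  Finset.prod_congr rfl fun i _ => by rw [signMatch, signMatch, h i]

theorem IsSPerm.act_simpleRoot_ne (hw : IsSPerm w) {j k : Fin n} (hkj : k ≠ j)
    (hj : act w (simpleRoot n j) = β ∨ act w (simpleRoot n j) = -β) :
    act w (simpleRoot n k) ≠ β ∧ act w (simpleRoot n k) ≠ -β := by
  have h_dual_k : act w (simpleRoot n k) ⬝ᵥ act w (fundWeight n k) = 1 := by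
    rw [hw.act_dotProduct_act, simpleRoot_dotProduct_fundWeight, if_pos rfl]
  have h_dual_j : β ⬝ᵥ act w (fundWeight n k) = 0 := by
    have : act w (simpleRoot n j) ⬝ᵥ act w (fundWeight n k) = 0 := by
      rw [hw.act_dotProduct_act, simpleRoot_dotProduct_fundWeight, if_neg hkj.symm]
    rcases hj with h | h <;> simpa [h] using this
  constructor <;> intro h <;> simp [h, h_dual_j] at h_dual_k

theorem rootReflection_eq_of_eq_or_eq_neg {α : Fin n → ℝ} (h : α = β ∨ α = -β) :
    rootReflection α = rootReflection β := by
  rcases h with rfl | rfl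
  · rfl
  · exact rootReflection_neg β

theorem coneTerm_sub_coneTerm_rootReflection (hw : IsSPerm w)
    (hz : IsAdjacentToWall z β) {j : Fin n}
    (hj : act w (simpleRoot n j) = β ∨ act w (simpleRoot n j) = -β) (u : Fin n → ℝ) :
    coneTerm z u w - coneTerm (rootReflection β z) u w =
      Real.sign (z ⬝ᵥ act w (simpleRoot n j)) *
        ∏ k ∈ Finset.univ.erase j,
          signMatch (z ⬝ᵥ act w (simpleRoot n k)) (u ⬝ᵥ act w (fundWeight n k)) := by
  have h_flip : rootReflection β z ⬝ᵥ act w (simpleRoot n j) =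
      -(z ⬝ᵥ act w (simpleRoot n j)) := by
    rw [rootReflection_dotProduct, ← rootReflection_eq_of_eq_or_eq_neg hj, rootReflection_self,
      dotProduct_neg]
  have h_rest : ∏ k ∈ Finset.univ.erase j, signMatch
        (rootReflection β z ⬝ᵥ act w (simpleRoot n k)) (u ⬝ᵥ act w (fundWeight n k)) =
      ∏ k ∈ Finset.univ.erase j, signMatch
        (z ⬝ᵥ act w (simpleRoot n k)) (u ⬝ᵥ act w (fundWeight n k)) := by
    refine Finset.prod_congr rfl fun k hk => ?_
    obtain ⟨h_ne, h_ne_neg⟩ := hw.act_simpleRoot_ne (Finset.ne_of_mem_erase hk) hj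
    rw [signMatch, signMatch, hz _ (hw.act_simpleRoot_mem_BnRoots k) h_ne h_ne_neg]
  rw [coneTerm, coneTerm, ← Finset.mul_prod_erase _ _ (Finset.mem_univ j),
    ← Finset.mul_prod_erase _ _ (Finset.mem_univ j), h_rest, h_flip, signMatch, signMatch,
    Real.sign_neg]
  ring

theorem coneTerm_sub_mul_simpleReflection (hw : IsSPerm w) (hz : IsAdjacentToWall z β)
    {j : Fin n} (hj : act w (simpleRoot n j) = β ∨ act w (simpleRoot n j) = -β) (u : Fin n → ℝ) :
    coneTerm z u (w * simpleReflection j) -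
        coneTerm (rootReflection β z) u (w * simpleReflection j) =
      -(coneTerm z u w - coneTerm (rootReflection β z) u w) := by
  have h_act (y : Fin n → ℝ) : act (w * simpleReflection j) y = rootReflection β (act w y) := by
    rw [hw.act_mul_simpleReflection, rootReflection_eq_of_eq_or_eq_neg hj]
  have h_neg : act (w * simpleReflection j) (simpleRoot n j) = -act w (simpleRoot n j) := by
    rw [hw.act_mul_simpleReflection, rootReflection_self]
  have h_weight {k : Fin n} (hk : k ≠ j) :
      act (w * simpleReflection j) (fundWeight n k) = act w (fundWeight n k) := by
    rw [hw.act_mul, act_simpleReflection, rootReflection_simpleRoot_fundWeight hk]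
  have hj' : act (w * simpleReflection j) (simpleRoot n j) = β ∨
      act (w * simpleReflection j) (simpleRoot n j) = -β := by
    rw [h_neg, neg_inj, neg_eq_iff_eq_neg]
    exact hj.symm
  rw [coneTerm_sub_coneTerm_rootReflection (hw.mul (isSPerm_simpleReflection j)) hz hj',
    coneTerm_sub_coneTerm_rootReflection hw hz hj, h_neg, dotProduct_neg, Real.sign_neg, neg_mul]
  congr 2
  refine Finset.prod_congr rfl fun k hk => ?_
  have hkj : k ≠ j := Finset.ne_of_mem_erase hk
  obtain ⟨h_ne, h_ne_neg⟩ := hw.act_simpleRoot_ne hkj hj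
  rw [h_weight hkj, h_act, ← rootReflection_dotProduct, signMatch, signMatch,
    hz _ (hw.act_simpleRoot_mem_BnRoots k) h_ne h_ne_neg]

theorem coneTerm_sub_eq_sum_ite (hw : IsSPerm w) (hz : IsAdjacentToWall z β) (u : Fin n → ℝ) :
    coneTerm z u w - coneTerm (rootReflection β z) u w =
      ∑ j, if act w (simpleRoot n j) = β ∨ act w (simpleRoot n j) = -β
        then coneTerm z u w - coneTerm (rootReflection β z) u w else 0 := by
  by_cases h : ∃ j, act w (simpleRoot n j) = β ∨ act w (simpleRoot n j) = -β
  · obtain ⟨j, hj⟩ := h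
    rw [Fintype.sum_eq_single j fun k hk => if_neg ?_, if_pos hj]
    exact not_or.2 (hw.act_simpleRoot_ne hk hj)
  · push Not at h
    rw [Finset.sum_eq_zero fun j _ => if_neg (not_or.2 (h j)), sub_eq_zero]
    exact coneTerm_congr
      (fun i => (hz _ (hw.act_simpleRoot_mem_BnRoots i) (h i).1 (h i).2).symm) u

-- The terms affected by crossing the wall of `β` cancel in pairs `w`, `w * s_j` sharing that wall.
theorem signedSum_rootReflection (hβ : β ∉ P) (hβ_neg : -β ∉ P) (hz : IsAdjacentToWall z β)
    (u : Fin n → ℝ) : signedSum P (rootReflection β z) u = signedSum P z u := by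
  rw [eq_comm, ← sub_eq_zero, signedSum, signedSum, ← Finset.sum_sub_distrib,
    Finset.sum_congr rfl fun w hw => coneTerm_sub_eq_sum_ite (mem_linExts.1 hw).1 hz u,
    Finset.sum_comm]
  refine Finset.sum_eq_zero fun j _ => ?_
  rw [← Finset.sum_filter]
  have h_cancel {w : Equiv.Perm (SIdx n)} (hw : w ∈ (linExts n P).filter fun w =>
      act w (simpleRoot n j) = β ∨ act w (simpleRoot n j) = -β) :=
    coneTerm_sub_mul_simpleReflection (mem_linExts.1 (Finset.mem_filter.1 hw).1).1 hz
      (Finset.mem_filter.1 hw).2 u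
  refine Finset.sum_involution (fun w _ => w * simpleReflection j) ?_ ?_ ?_ ?_
  · intro w hw
    rw [h_cancel hw, add_neg_cancel]
  · intro w hw h_ne h_eq
    have := h_cancel hw
    rw [h_eq] at this
    exact h_ne (self_eq_neg.1 this)
  · intro w hw
    obtain ⟨hw, hj⟩ := Finset.mem_filter.1 hw
    have hjP : act w (simpleRoot n j) ∉ P := by rcases hj with h | h <;> rwa [h]
    refine Finset.mem_filter.2 ⟨mul_simpleReflection_mem_linExts hw hjP, ?_⟩
    rw [(mem_linExts.1 hw).1.act_mul_simpleReflection, rootReflection_self, neg_inj,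
      neg_eq_iff_eq_neg]
    exact hj.symm
  · intro w _
    rw [mul_assoc, simpleReflection_mul_self, mul_one]

theorem signedSum_act_rho_mul_simpleReflection (hP : P ⊆ BnRoots n) (hw : w ∈ linExts n P)
    {i : Fin n} (hi : act w (simpleRoot n i) ∉ P) (u : Fin n → ℝ) :
    signedSum P (act (w * simpleReflection i) (rho n)) u = signedSum P (act w (rho n)) u := by
  have hwS : IsSPerm w := (mem_linExts.1 hw).1
  rw [hwS.act_mul_simpleReflection]
  exact signedSum_rootReflection hi (neg_act_simpleRoot_notMem hP hw i)
    (isAdjacentToWall_act_rho hwS i) u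

theorem signedSum_eq_signedSum_act_rho
    (hx : ∀ w ∈ linExts n P, ∀ i, x ⬝ᵥ act w (simpleRoot n i) ≠ 0) (hv : IsSPerm v)
    (hxv : IsDominant x v) (u : Fin n → ℝ) :
    signedSum P x u = signedSum P (act v (rho n)) u := by
  refine Finset.sum_congr rfl fun w hw => coneTerm_congr (fun i => ?_) u
  have h_root := (mem_linExts.1 hw).1.act_simpleRoot_mem_BnRoots i
  refine sign_eq_sign_of_mul_pos ((hxv.mul_act_rho_nonneg hv h_root).lt_of_ne' ?_)
  exact mul_ne_zero (hx w hw i) (hv.act_rho_dotProduct_ne_zero h_root)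

theorem mul_pos_of_coneTerm_act_rho_ne_zero (hu : IsGeneric u) (hv : IsSPerm v) (hw : IsSPerm w)
    (h : coneTerm (act v (rho n)) u w ≠ 0) (i : Fin n) :
    0 < (act v (rho n) ⬝ᵥ act w (simpleRoot n i)) * (u ⬝ᵥ act w (fundWeight n i)) :=
  mul_pos_of_signMatch_ne_zero
    (hv.act_rho_dotProduct_ne_zero (hw.act_simpleRoot_mem_BnRoots i)) (hu w hw i)
    (Finset.prod_ne_zero_iff.1 h i (Finset.mem_univ i))

theorem dotProduct_act_fundWeight_nonneg_of_mem_nnSpan (hu : u ∈ nnSpan P) (hw : IsLinExt P w)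
    (i : Fin n) : 0 ≤ u ⬝ᵥ act w (fundWeight n i) := by
  obtain ⟨r, c, α, hc, hα, rfl⟩ := hu
  rw [sum_dotProduct]
  refine Finset.sum_nonneg fun m _ => ?_
  obtain ⟨γ, hγ, h_eq⟩ := hw.2 _ (hα m)
  rw [smul_dotProduct, h_eq, spAct_eq_act, hw.1.act_dotProduct_act]
  exact mul_nonneg (hc m) (dotProduct_fundWeight_nonneg hγ i)

theorem signedSum_act_rho_eq_one (hv : v ∈ linExts n P) (hu : IsGeneric u) (huP : u ∈ nnSpan P) :
    signedSum P (act v (rho n)) u = 1 := by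
  have hvS : IsSPerm v := (mem_linExts.1 hv).1
  have hu_pos {w : Equiv.Perm (SIdx n)} (hw : w ∈ linExts n P) (i : Fin n) :
      0 < u ⬝ᵥ act w (fundWeight n i) :=
    (dotProduct_act_fundWeight_nonneg_of_mem_nnSpan huP (mem_linExts.1 hw) i).lt_of_ne'
      (hu w (mem_linExts.1 hw).1 i)
  rw [signedSum, Finset.sum_eq_single_of_mem v hv]
  · refine Finset.prod_eq_one fun i _ => signMatch_of_pos_of_pos ?_ (hu_pos hv i)
    rw [hvS.act_dotProduct_act, rho_dotProduct_simpleRoot]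
    exact one_pos
  · intro w hw h_ne
    have hwS : IsSPerm w := (mem_linExts.1 hw).1
    by_contra h_term
    refine h_ne (eq_of_isDominant_act_rho hvS hwS fun i => le_of_lt ?_)
    exact pos_of_mul_pos_left (mul_pos_of_coneTerm_act_rho_ne_zero hu hvS hwS h_term i)
      (hu_pos hw i).le

theorem signedSum_act_rho_eq_zero_of_isDominant (hv : IsSPerm v) (hfv : IsDominant f v)
    (hu : IsGeneric u) (hfu : f ⬝ᵥ u < 0) : signedSum P (act v (rho n)) u = 0 := by
  refine Finset.sum_eq_zero fun w hw => ?_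
  have hwS : IsSPerm w := (mem_linExts.1 hw).1
  by_contra h_term
  refine hfu.not_ge ?_
  rw [dotProduct_comm, hwS.dotProduct_eq_sum]
  refine Finset.sum_nonneg fun i _ => ?_
  have h_dominant := hfv.mul_act_rho_nonneg hv (hwS.act_simpleRoot_mem_BnRoots i)
  have h_match := mul_pos_of_coneTerm_act_rho_ne_zero hu hv hwS h_term i
  rw [mul_pos_iff] at h_match
  rcases h_match with ⟨h_rho, h_u⟩ | ⟨h_rho, h_u⟩
  · exact mul_nonneg h_u.le (nonneg_of_mul_nonneg_left h_dominant h_rho)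
  · exact mul_nonneg_of_nonpos_of_nonpos h_u.le (nonpos_of_mul_nonneg_left h_dominant h_rho)

theorem signedSum_act_rho_eq_zero (hP : P ⊆ BnRoots n) (hfP : ∀ α ∈ P, 0 < f ⬝ᵥ α)
    (hfu : f ⬝ᵥ u < 0) (hu : IsGeneric u) (hv : v ∈ linExts n P) :
    signedSum P (act v (rho n)) u = 0 := by
  obtain ⟨v', hv', h_eq, hfv'⟩ := exists_isDominant_of_flip_invariant hfP
    (p := fun w => signedSum P (act w (rho n)) u = signedSum P (act v (rho n)) u)
    (fun w hw i hi h => (signedSum_act_rho_mul_simpleReflection hP hw hi u).trans h) hv rfl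
  rw [← h_eq]
  exact signedSum_act_rho_eq_zero_of_isDominant (mem_linExts.1 hv').1 hfv' hu hfu

end SignedSums

/-! ### The signed sum as the indicator function of the root cone -/

section RootCone

variable {n : ℕ} {P : Set (Fin n → ℝ)} {u x : Fin n → ℝ}

theorem nnSpan_eq_hull (P : Set (Fin n → ℝ)) : nnSpan P = PointedCone.hull ℝ P := by
  ext y
  rw [SetLike.mem_coe, Submodule.mem_span_set']
  constructor
  · rintro ⟨r, c, β, hc, hβ, rfl⟩
    exact ⟨r, fun m => ⟨c m, hc m⟩, fun m => ⟨β m, hβ m⟩, rfl⟩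
  · rintro ⟨r, c, β, rfl⟩
    exact ⟨r, fun m => c m, fun m => β m, fun m => (c m).2, fun m => (β m).2, rfl⟩

theorem convex_nnSpan (P : Set (Fin n → ℝ)) : Convex ℝ (nnSpan P) := by
  rw [nnSpan_eq_hull]
  exact (PointedCone.hull ℝ P).convex

theorem exists_nonneg_neg_of_notMem_closure_nnSpan (hu : u ∉ closure (nnSpan P)) :
    ∃ g : Fin n → ℝ, (∀ α ∈ P, 0 ≤ g ⬝ᵥ α) ∧ g ⬝ᵥ u < 0 := by
  rw [nnSpan_eq_hull] at hu
  obtain ⟨g, hgP, hgu⟩ := ProperCone.hyperplane_separation_point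
    (C := Submodule.closure (PointedCone.hull ℝ P)) hu
  obtain ⟨y, hy⟩ := (dotProductEquiv ℝ (Fin n)).surjective (g : (Fin n → ℝ) →ₗ[ℝ] ℝ)
  have h_repr (z : Fin n → ℝ) : y ⬝ᵥ z = g z := LinearMap.congr_fun hy z
  refine ⟨y, fun α hα => ?_, (h_repr u).trans_lt hgu⟩
  rw [h_repr]
  exact hgP α (subset_closure (Submodule.subset_span hα))

theorem exists_pos_neg_of_notMem_closure_nnSpan (hx : ∀ α ∈ P, 0 < x ⬝ᵥ α)
    (hu : u ∉ closure (nnSpan P)) : ∃ f : Fin n → ℝ, (∀ α ∈ P, 0 < f ⬝ᵥ α) ∧ f ⬝ᵥ u < 0 := by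
  obtain ⟨g, hgP, hgu⟩ := exists_nonneg_neg_of_notMem_closure_nnSpan hu
  obtain ⟨ε, hε, h_small⟩ : ∃ ε > 0, x ⬝ᵥ u * ε < -(g ⬝ᵥ u) :=
    exists_pos_mul_lt (neg_pos.2 hgu) _
  refine ⟨g + ε • x, fun α hα => ?_, ?_⟩ <;> rw [add_dotProduct, smul_dotProduct, smul_eq_mul]
  · exact add_pos_of_nonneg_of_pos (hgP α hα) (mul_pos hε (hx α hα))
  · linarith

theorem signedSum_eq_indicator_nnSpan (hP : P ⊆ BnRoots n) (hx : ∀ α ∈ P, 0 < x ⬝ᵥ α)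
    (hx' : ∀ w ∈ linExts n P, ∀ i, x ⬝ᵥ act w (simpleRoot n i) ≠ 0) (hu : IsGeneric u)
    (hu_frontier : u ∉ frontier (nnSpan P)) :
    signedSum P x u = (nnSpan P).indicator 1 u := by
  obtain ⟨v, hv, hxv⟩ := exists_isDominant x
  have hvP : v ∈ linExts n P := hxv.mem_linExts hv hP hx
  rw [signedSum_eq_signedSum_act_rho hx' hv hxv]
  by_cases huK : u ∈ nnSpan P
  · rw [signedSum_act_rho_eq_one hvP hu huK, Set.indicator_of_mem huK, Pi.one_apply]
  · have hu_closure : u ∉ closure (nnSpan P) := by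
      rw [closure_eq_self_union_frontier]
      exact not_or.2 ⟨huK, hu_frontier⟩
    obtain ⟨f, hfP, hfu⟩ := exists_pos_neg_of_notMem_closure_nnSpan hx hu_closure
    rw [signedSum_act_rho_eq_zero hP hfP hfu hu hvP, Set.indicator_of_notMem huK]

end RootCone

/-! ### Integration -/

section Integration

variable {n : ℕ} {P : Set (Fin n → ℝ)} {w : Equiv.Perm (SIdx n)} {x : Fin n → ℝ}

theorem signMatch_neg_neg (a b : ℝ) : signMatch (-a) (-b) = -signMatch a b := by
  rw [signMatch, signMatch, Real.sign_neg, Real.sign_neg]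
  ring

theorem signMatch_mul_exp_ae_eq_indicator {c : ℝ} (hc : 0 < c) :
    (fun t => signMatch c t * Real.exp (-(t * c))) =ᵐ[volume]
      (Set.Ioi 0).indicator fun t => Real.exp (-c * t) := by
  filter_upwards [Measure.ae_ne volume (0 : ℝ)] with t ht
  rcases ht.lt_or_gt with h_neg | h_pos
  · rw [Set.indicator_of_notMem (Set.notMem_Ioi.2 h_neg.le), signMatch, Real.sign_of_pos hc,
      Real.sign_of_neg h_neg]
    ring
  · rw [Set.indicator_of_mem (Set.mem_Ioi.2 h_pos), signMatch_of_pos_of_pos hc h_pos, one_mul,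
      neg_mul, mul_comm]

theorem integrable_signMatch_mul_exp_of_pos {c : ℝ} (hc : 0 < c) :
    Integrable fun t => signMatch c t * Real.exp (-(t * c)) := by
  rw [integrable_congr (signMatch_mul_exp_ae_eq_indicator hc),
    integrable_indicator_iff measurableSet_Ioi]
  exact integrableOn_exp_mul_Ioi (neg_lt_zero.2 hc) 0

theorem integral_signMatch_mul_exp_of_pos {c : ℝ} (hc : 0 < c) :
    ∫ t, signMatch c t * Real.exp (-(t * c)) = c⁻¹ := by
  rw [integral_congr_ae (signMatch_mul_exp_ae_eq_indicator hc),
    integral_indicator measurableSet_Ioi, integral_exp_mul_Ioi (neg_lt_zero.2 hc), mul_zero,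
    Real.exp_zero, neg_div_neg_eq, one_div]

theorem signMatch_mul_exp_eq_neg_comp_neg (c t : ℝ) :
    signMatch c t * Real.exp (-(t * c)) = -(signMatch (-c) (-t) * Real.exp (-(-t * -c))) := by
  rw [signMatch_neg_neg, neg_mul_neg, neg_mul, neg_neg]

theorem integrable_signMatch_mul_exp {c : ℝ} (hc : c ≠ 0) :
    Integrable fun t => signMatch c t * Real.exp (-(t * c)) := by
  rcases hc.lt_or_gt with h_neg | h_pos
  · simp_rw [signMatch_mul_exp_eq_neg_comp_neg c]
    exact (integrable_signMatch_mul_exp_of_pos (neg_pos.2 h_neg)).comp_neg.neg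
  · exact integrable_signMatch_mul_exp_of_pos h_pos

theorem integral_signMatch_mul_exp {c : ℝ} (hc : c ≠ 0) :
    ∫ t, signMatch c t * Real.exp (-(t * c)) = c⁻¹ := by
  rcases hc.lt_or_gt with h_neg | h_pos
  · simp_rw [signMatch_mul_exp_eq_neg_comp_neg c]
    rw [integral_neg,
      integral_neg_eq_self (fun t => signMatch (-c) t * Real.exp (-(t * -c))) volume,
      integral_signMatch_mul_exp_of_pos (neg_pos.2 h_neg), inv_neg, neg_neg]
  · exact integral_signMatch_mul_exp_of_pos h_pos

/-- The matrix with rows `w ω_i`, which sends `u` to its coordinates in the basis `w α_i`. -/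
def weightMatrix (w : Equiv.Perm (SIdx n)) : Matrix (Fin n) (Fin n) ℝ :=
  Matrix.of fun i => act w (fundWeight n i)

theorem toLin'_weightMatrix_apply (w : Equiv.Perm (SIdx n)) (u : Fin n → ℝ) (i : Fin n) :
    Matrix.toLin' (weightMatrix w) u i = u ⬝ᵥ act w (fundWeight n i) := by
  rw [Matrix.toLin'_apply, dotProduct_comm]
  rfl

theorem det_of_fundWeight (n : ℕ) : (Matrix.of (fundWeight n)).det = 1 := by
  rw [Matrix.det_of_isLowerTriangular]
  · simp [fundWeight]
  · intro i j (hij : i < j)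
    simp [fundWeight, hij]

theorem IsSPerm.abs_det_weightMatrix (hw : IsSPerm w) : |(weightMatrix w).det| = 1 := by
  have h_gram : weightMatrix w * (weightMatrix w).transpose =
      Matrix.of (fundWeight n) * (Matrix.of (fundWeight n)).transpose := by
    ext i j
    exact hw.act_dotProduct_act (fundWeight n i) (fundWeight n j)
  have h_sq := congrArg Matrix.det h_gram
  rw [Matrix.det_mul, Matrix.det_mul, Matrix.det_transpose, Matrix.det_transpose,
    det_of_fundWeight, mul_one, ← sq] at h_sq
  rcases sq_eq_one_iff.1 h_sq with h | h <;> rw [h]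
  · exact abs_one
  · rw [abs_neg, abs_one]

theorem IsSPerm.measurePreserving_weightMatrix (hw : IsSPerm w) :
    MeasurePreserving (Matrix.toLin' (weightMatrix w)) volume volume := by
  have h_abs := hw.abs_det_weightMatrix
  have h_ne : (weightMatrix w).det ≠ 0 := fun h => by simp [h] at h_abs
  refine ⟨(LinearMap.continuous_of_finiteDimensional _).measurable, ?_⟩
  rw [Real.map_matrix_volume_pi_eq_smul_volume_pi h_ne, abs_inv, h_abs, inv_one,
    ENNReal.ofReal_one, one_smul]

theorem ae_isGeneric (n : ℕ) : ∀ᵐ u : Fin n → ℝ, IsGeneric u := by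
  have h_wall (i : Fin n) : ∀ᵐ t : Fin n → ℝ, t i ≠ 0 := by
    simp only [ae_iff, not_not]
    exact Measure.pi_hyperplane (fun _ => volume) i 0
  simp only [IsGeneric, ae_all_iff, Filter.eventually_imp_distrib_left]
  intro w hw i
  simpa only [toLin'_weightMatrix_apply] using
    hw.measurePreserving_weightMatrix.quasiMeasurePreserving.ae (h_wall i)

theorem IsSPerm.coneTerm_mul_exp_eq_prod (hw : IsSPerm w) (x u : Fin n → ℝ) :
    coneTerm x u w * Real.exp (-(x ⬝ᵥ u)) =
      ∏ i, signMatch (x ⬝ᵥ act w (simpleRoot n i)) (Matrix.toLin' (weightMatrix w) u i) *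
        Real.exp (-(Matrix.toLin' (weightMatrix w) u i * (x ⬝ᵥ act w (simpleRoot n i)))) := by
  simp only [toLin'_weightMatrix_apply]
  rw [Finset.prod_mul_distrib, ← Real.exp_sum, Finset.sum_neg_distrib, ← hw.dotProduct_eq_sum,
    dotProduct_comm u x, coneTerm]

theorem integrable_prod_signMatch_mul_exp {c : Fin n → ℝ} (hc : ∀ i, c i ≠ 0) :
    Integrable fun t : Fin n → ℝ => ∏ i, signMatch (c i) (t i) * Real.exp (-(t i * c i)) :=
  Integrable.fintype_prod (μ := fun _ => volume)
    (f := fun i t => signMatch (c i) t * Real.exp (-(t * c i)))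
    fun i => integrable_signMatch_mul_exp (hc i)

theorem integral_prod_signMatch_mul_exp {c : Fin n → ℝ} (hc : ∀ i, c i ≠ 0) :
    ∫ t : Fin n → ℝ, ∏ i, signMatch (c i) (t i) * Real.exp (-(t i * c i)) = ∏ i, (c i)⁻¹ := by
  rw [integral_fintype_prod_volume_eq_prod
    fun i t => signMatch (c i) t * Real.exp (-(t * c i))]
  exact Finset.prod_congr rfl fun i _ => integral_signMatch_mul_exp (hc i)

theorem IsSPerm.integrable_coneTerm_mul_exp (hw : IsSPerm w)
    (hx : ∀ i, x ⬝ᵥ act w (simpleRoot n i) ≠ 0) :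
    Integrable fun u => coneTerm x u w * Real.exp (-(x ⬝ᵥ u)) := by
  simp_rw [hw.coneTerm_mul_exp_eq_prod x]
  exact hw.measurePreserving_weightMatrix.integrable_comp_of_integrable
    (integrable_prod_signMatch_mul_exp hx)

theorem IsSPerm.integral_coneTerm_mul_exp (hw : IsSPerm w)
    (hx : ∀ i, x ⬝ᵥ act w (simpleRoot n i) ≠ 0) :
    ∫ u, coneTerm x u w * Real.exp (-(x ⬝ᵥ u)) = ∏ i, (x ⬝ᵥ act w (simpleRoot n i))⁻¹ := by
  have h_map := hw.measurePreserving_weightMatrix.map_eq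
  have h_meas := (integrable_prod_signMatch_mul_exp hx).aestronglyMeasurable
  rw [← h_map] at h_meas
  simp_rw [hw.coneTerm_mul_exp_eq_prod x]
  rw [← integral_prod_signMatch_mul_exp hx, ← integral_map
    hw.measurePreserving_weightMatrix.measurable.aemeasurable h_meas, h_map]

theorem indicator_nnSpan_exp_ae_eq_sum_coneTerm (hP : P ⊆ BnRoots n)
    (hx : ∀ α ∈ P, 0 < x ⬝ᵥ α)
    (hx' : ∀ w ∈ linExts n P, ∀ i, x ⬝ᵥ act w (simpleRoot n i) ≠ 0) :
    (nnSpan P).indicator (fun u => Real.exp (-(x ⬝ᵥ u))) =ᵐ[volume]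
      fun u => ∑ w ∈ linExts n P, coneTerm x u w * Real.exp (-(x ⬝ᵥ u)) := by
  have h_frontier : ∀ᵐ u, u ∉ frontier (nnSpan P) :=
    measure_eq_zero_iff_ae_notMem.1 ((convex_nnSpan P).addHaar_frontier volume)
  filter_upwards [ae_isGeneric n, h_frontier] with u hu hu_frontier
  rw [← Finset.sum_mul, ← signedSum, signedSum_eq_indicator_nnSpan hP hx hx' hu hu_frontier]
  simp [Set.indicator_apply]

theorem integrableOn_nnSpan_exp (hP : P ⊆ BnRoots n) (hx : ∀ α ∈ P, 0 < x ⬝ᵥ α)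
    (hx' : ∀ w ∈ linExts n P, ∀ i, x ⬝ᵥ act w (simpleRoot n i) ≠ 0) :
    IntegrableOn (fun u => Real.exp (-(x ⬝ᵥ u))) (nnSpan P) := by
  have h_indicator : Integrable ((nnSpan P).indicator fun u => Real.exp (-(x ⬝ᵥ u))) := by
    rw [integrable_congr (indicator_nnSpan_exp_ae_eq_sum_coneTerm hP hx hx')]
    exact integrable_finsetSum _ fun w hw =>
      (mem_linExts.1 hw).1.integrable_coneTerm_mul_exp (hx' w hw)
  refine h_indicator.integrableOn.congr ?_
  filter_upwards [ae_restrict_mem₀ ((convex_nnSpan P).nullMeasurableSet volume)] with u hu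
  exact Set.indicator_of_mem hu _

theorem setIntegral_nnSpan_exp (hP : P ⊆ BnRoots n) (hx : ∀ α ∈ P, 0 < x ⬝ᵥ α)
    (hx' : ∀ w ∈ linExts n P, ∀ i, x ⬝ᵥ act w (simpleRoot n i) ≠ 0) :
    ∫ u in nnSpan P, Real.exp (-(x ⬝ᵥ u)) =
      ∑ w ∈ linExts n P, ∏ i, (x ⬝ᵥ act w (simpleRoot n i))⁻¹ := by
  rw [← integral_indicator₀ ((convex_nnSpan P).nullMeasurableSet volume),
    integral_congr_ae (indicator_nnSpan_exp_ae_eq_sum_coneTerm hP hx hx'),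
    integral_finsetSum _ fun w hw =>
      (mem_linExts.1 hw).1.integrable_coneTerm_mul_exp (hx' w hw)]
  exact Finset.sum_congr rfl fun w hw =>
    (mem_linExts.1 hw).1.integral_coneTerm_mul_exp (hx' w hw)

end Integration

theorem statement_2_general (n : ℕ) (P : Set (Fin n → ℝ)) (hP : P ⊆ BnRoots n)
    (x : Fin n → ℝ) (hx : ∀ α ∈ P, 0 < dotR x α)
    (hx' : ∀ w ∈ linExts n P, ∀ i : Fin n, dotR x (spAct w (simpleRoot n i)) ≠ 0) :
    IntegrableOn (fun u => Real.exp (-dotR x u)) (rootCone P) volume ∧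
    ∫ u in rootCone P, Real.exp (-dotR x u) =
      ∑ w ∈ linExts n P, ∏ i : Fin n, (dotR x (spAct w (simpleRoot n i)))⁻¹ := by
  simp only [dotR_eq_dotProduct, spAct_eq_act] at hx hx' ⊢
  exact ⟨integrableOn_nnSpan_exp hP hx hx', setIntegral_nnSpan_exp hP hx hx'⟩

theorem statement_2 (n : ℕ) (hn : 1 ≤ n) (P : Set (Fin n → ℝ)) (hP : IsSignedPoset n P)
    (x : Fin n → ℝ) (hx : ∀ α ∈ P, 0 < dotR x α)
    (hx' : ∀ w ∈ linExts n P, ∀ i : Fin n, dotR x (spAct w (simpleRoot n i)) ≠ 0) :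
    IntegrableOn (fun u => Real.exp (-dotR x u)) (rootCone P) volume ∧
    ∫ u in rootCone P, Real.exp (-dotR x u) =
      ∑ w ∈ linExts n P, ∏ i : Fin n, (dotR x (spAct w (simpleRoot n i)))⁻¹ :=
  statement_2_general n P hP.1 x hx hx'
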